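/- Let ν ≥ 3/2 and let T : ℤ³ → ℂ satisfy T(k,m,n) = conj(T(−k,−m,−n)), T(k,m,n) = T(k,n,m), T(k,m,n) = T(m,n,k), T(k,m,n) = 0 whenever kmn = 0, and the bound |T(k,m,n)| ≤ C |kmn|^{1/2} min{|k|^{ν−3/2}, |m|^{ν−3/2}, |n|^{ν−3/2}}. Let s > ν + 1/2 and let I be an open time interval. Suppose φ̂ : ℤ × I → ℂ satisfies φ̂(0,t) = 0 and φ̂(−k,t) = conj(φ̂(k,t)), the Sobolev bound sup_{t∈I} Σ_k |k|^{2s}|φ̂(k,t)|² < ∞ with t ↦ φ̂(·,t) continuous into this norm, each φ̂(k,·) is differentiable, and the spectral evolution equation ∂_t φ̂(k,t) + i·sgn(k) Σ_{n∈ℤ} T(−k, k−n, n) φ̂(k−n,t) φ̂(n,t) = 0 holds for all k ∈ ℤ, t ∈ I. Then the momentum 𝒫(t) = Σ_{k=1}^∞ k |φ̂(k,t)|² is constant on I. -/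

import Mathlib

open scoped BigOperators
open Filter

/-- The homogeneous Sobolev norm of order `s` of a Fourier coefficient sequence. -/
noncomputable def hnorm (s : ℝ) (u : ℤ → ℂ) : ℝ :=
  (∑' k : ℤ, |(k : ℝ)| ^ (2 * s) * ‖u k‖ ^ 2) ^ ((1 : ℝ) / 2)

/-- Continuity of `t ↦ u(·,t)` on `I` with values in `Ḣ^s`. -/
def HsContOn (s : ℝ) (u : ℝ → ℤ → ℂ) (I : Set ℝ) : Prop :=
  ∀ t₀ ∈ I, Tendsto (fun t => hnorm s fun k => u t k - u t₀ k) (nhdsWithin t₀ I) (nhds 0)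

/-!
Write the equation as `∂ₜ φ̂(k) = -i sgn(k) Q(k)` and sum over all of `ℤ`, so that
`2𝒫 = ∑ |k| |φ̂(k)|²`. Since `|k| sgn(k) = k` and `conj (φ̂ k) = φ̂ (-k)`, the time derivative of
the `k`-th term is `2 Im (k φ̂(-k) Q(k))`. Up to a factor `-2` this is the imaginary part of the
sum, over the triads `p + q + r = 0` with `p = -k`, of `p` times the cyclically invariant quantity
`T(p,q,r) φ̂(p) φ̂(q) φ̂(r)`. Averaging over rotations replaces the weight `p` by
`(p + q + r) / 3 = 0`.

Absolute convergence comes from `|p| ≤ 2 max(|q|, |r|)`, which moves half a derivative from `p` to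
the larger of `q` and `r`: two frequencies then carry the weight `|·|`, which leaves them in `ℓ²`,
and the third one carries `|·|^(ν-1)`, which leaves it in `ℓ¹` because `s > ν - 1/2`.
-/

open MeasureTheory Set
open scoped ENNReal ComplexConjugate

section TermwiseIntegration

variable {ι E : Type*} [NormedAddCommGroup E] [NormedSpace ℝ E] [CompleteSpace E]

theorem aestronglyMeasurable_of_hasDerivAt {f f' : ℝ → E} {S : Set ℝ} (hS : MeasurableSet S)
    (hf : ∀ t ∈ S, HasDerivAt f (f' t) t) : AEStronglyMeasurable f' (volume.restrict S) :=
  (aestronglyMeasurable_deriv f _).congr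
    (ae_restrict_of_forall_mem hS fun t ht => (hf t ht).deriv)

theorem tsum_sub_tsum_eq_integral_tsum [Countable ι] {f f' : ι → ℝ → E} {t₀ t₁ : ℝ} {K : ℝ≥0∞}
    (hf : ∀ i, ∀ t ∈ uIcc t₀ t₁, HasDerivAt (f i) (f' i t) t) (hK : K ≠ ∞)
    (hf' : ∀ t ∈ uIcc t₀ t₁, ∑' i, ‖f' i t‖ₑ ≤ K)
    (h₀ : Summable fun i => f i t₀) (h₁ : Summable fun i => f i t₁) :
    ∑' i, f i t₁ - ∑' i, f i t₀ = ∫ t in t₀..t₁, ∑' i, f' i t := by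
  have hmeas (i : ι) : AEStronglyMeasurable (f' i) (volume.restrict (uIoc t₀ t₁)) :=
    aestronglyMeasurable_of_hasDerivAt measurableSet_uIoc fun t ht => hf i t (uIoc_subset_uIcc ht)
  have hfin : ∑' i, ∫⁻ t in uIoc t₀ t₁, ‖f' i t‖ₑ ≠ ∞ := by
    rw [← lintegral_tsum fun i => (hmeas i).enorm]
    refine ne_top_of_le_ne_top ?_
      (setLIntegral_mono measurable_const fun t ht => hf' t (uIoc_subset_uIcc ht))
    simpa using ENNReal.mul_ne_top hK (by simp)
  have hint (i : ι) : IntervalIntegrable (f' i) volume t₀ t₁ :=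
    intervalIntegrable_iff.2 ⟨hmeas i, (ENNReal.ne_top_of_tsum_ne_top hfin i).lt_top⟩
  calc ∑' i, f i t₁ - ∑' i, f i t₀
      = ∑' i, ∫ t in t₀..t₁, f' i t := by
        rw [← h₁.tsum_sub h₀]
        exact tsum_congr fun i =>
          (intervalIntegral.integral_eq_sub_of_hasDerivAt (hf i) (hint i)).symm
    _ = ∫ t in t₀..t₁, ∑' i, f' i t := by
        simp only [intervalIntegral.intervalIntegral_eq_integral_uIoc, tsum_const_smul'']
        rw [integral_tsum hmeas hfin]

end TermwiseIntegration

theorem mul_le_sq_add_sq {R : Type*} [CommSemiring R] [LinearOrder R] [CanonicallyOrderedAdd R]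
    (x y : R) : x * y ≤ x ^ 2 + y ^ 2 := by
  rcases le_total x y with h | h
  · calc x * y ≤ y ^ 2 := by rw [sq]; gcongr
      _ ≤ x ^ 2 + y ^ 2 := le_add_self
  · calc x * y ≤ x ^ 2 := by rw [sq]; gcongr
      _ ≤ x ^ 2 + y ^ 2 := le_self_add

section Triads

variable {G : Type*} [AddCommGroup G]

/-- The cyclic rotation `(p, q, r) ↦ (r, p, q)` of the triads `p + q + r = 0`. A triad is encoded by
its first two entries `(p, q)`, the third one being `-p - q`. -/
@[simps]
def triadRotation : G × G ≃ G × G where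
  toFun x := (-x.1 - x.2, x.1)
  invFun x := (x.2, -x.1 - x.2)
  left_inv x := by ext <;> simp
  right_inv x := by ext <;> simp [sub_eq_add_neg, add_comm]

theorem hasSum_fst_zsmul_of_rotation_invariant {E : Type*} [AddCommGroup E] [IsAddTorsionFree E]
    [TopologicalSpace E] [ContinuousAdd E] [T2Space E] {f : ℤ × ℤ → E}
    (hf : ∀ x, f (triadRotation x) = f x) (hsum : Summable fun x => x.1 • f x) :
    HasSum (fun x => x.1 • f x) 0 := by
  obtain ⟨S, hp⟩ := hsum
  have hr : HasSum (fun x => (-x.1 - x.2) • f x) S := by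
    convert triadRotation.hasSum_iff.2 hp using 2 with x
    rw [Function.comp_apply, hf, triadRotation_apply]
  have hq : HasSum (fun x => x.2 • f x) S := by
    convert triadRotation.hasSum_iff.2 hr using 2 with x
    rw [Function.comp_apply, hf]
    simp
  have htriple : S + S + S = 0 := by
    refine ((hp.add hq).add hr).unique ?_
    convert hasSum_zero using 2 with x
    simp [← add_smul]
  have hS : S = 0 := by
    rw [← nsmul_eq_zero_iff_right three_ne_zero]
    simpa [succ_nsmul] using htriple
  rwa [hS] at hp

theorem tsum_triad_fst_mul_thd (f g : G → ℝ≥0∞) :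
    ∑' p, ∑' q, f p * g (-p - q) = (∑' p, f p) * ∑' r, g r := by
  rw [← ENNReal.tsum_mul_right]
  refine tsum_congr fun p => ?_
  rw [ENNReal.tsum_mul_left, ← (Equiv.subLeft (-p)).tsum_eq g]
  rfl

theorem tsum_triad_mul_le (f g : G → ℝ≥0∞) :
    ∑' x : G × G, f x.1 * f x.2 * g (-x.1 - x.2) ≤ 2 * ((∑' p, f p ^ 2) * ∑' r, g r) := by
  calc ∑' x : G × G, f x.1 * f x.2 * g (-x.1 - x.2)
      ≤ ∑' x : G × G, (f x.1 ^ 2 * g (-x.1 - x.2) + f x.2 ^ 2 * g (-x.2 - x.1)) := by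
        refine ENNReal.tsum_le_tsum fun x => ?_
        rw [show -x.2 - x.1 = -x.1 - x.2 by abel, ← add_mul]
        gcongr
        exact mul_le_sq_add_sq _ _
    _ = ∑' p, ∑' q, f p ^ 2 * g (-p - q) + ∑' q, ∑' p, f q ^ 2 * g (-q - p) := by
        rw [ENNReal.tsum_add, ENNReal.tsum_prod', ENNReal.tsum_prod', ENNReal.tsum_comm (β := G)]
    _ = 2 * ((∑' p, f p ^ 2) * ∑' r, g r) := by
        rw [tsum_triad_fst_mul_thd (fun p => f p ^ 2), two_mul]

theorem tsum_triad_mul_rotate_le (f g : G → ℝ≥0∞) :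
    ∑' x : G × G, f x.1 * f (-x.1 - x.2) * g x.2 ≤ 2 * ((∑' p, f p ^ 2) * ∑' r, g r) := by
  refine le_of_eq_of_le ?_ (tsum_triad_mul_le f g)
  rw [← triadRotation.tsum_eq fun x => f x.1 * f x.2 * g (-x.1 - x.2)]
  refine tsum_congr fun x => ?_
  simp [mul_comm (f x.1)]

end Triads

section AbsDeriv

variable {E : Type*} [NormedAddCommGroup E] [NormedSpace ℝ E]

/-- The Fourier multiplier `|D|^σ`, acting on a sequence of Fourier coefficients. For `σ ≠ 0` it
annihilates the zero mode, even if `σ < 0`, since then `0 ^ σ = 0`. -/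
noncomputable def absDeriv (σ : ℝ) (u : ℤ → E) (k : ℤ) : E :=
  (|(k : ℝ)| ^ σ) • u k

theorem norm_absDeriv (σ : ℝ) (u : ℤ → E) (k : ℤ) : ‖absDeriv σ u k‖ = |(k : ℝ)| ^ σ * ‖u k‖ := by
  rw [absDeriv, norm_smul, Real.norm_of_nonneg (by positivity)]

theorem norm_absDeriv_sq (σ : ℝ) (u : ℤ → E) (k : ℤ) :
    ‖absDeriv σ u k‖ ^ 2 = |(k : ℝ)| ^ (2 * σ) * ‖u k‖ ^ 2 := by
  rw [norm_absDeriv, mul_pow, mul_comm 2 σ, ← Nat.cast_ofNat (R := ℝ),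
    Real.rpow_mul_natCast (abs_nonneg _)]

theorem absDeriv_zero {σ : ℝ} (hσ : σ ≠ 0) (u : ℤ → E) : absDeriv σ u 0 = 0 := by
  simp [absDeriv, hσ]

theorem norm_absDeriv_mono {σ s : ℝ} (hσ : σ ≠ 0) (hσs : σ ≤ s) (u : ℤ → E) (k : ℤ) :
    ‖absDeriv σ u k‖ ≤ ‖absDeriv s u k‖ := by
  rcases eq_or_ne k 0 with rfl | hk
  · simp [absDeriv_zero hσ]
  · have hk' : 1 ≤ |(k : ℝ)| := mod_cast Int.one_le_abs hk
    simp only [norm_absDeriv]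
    gcongr

theorem absDeriv_eq_smul {σ : ℝ} (hσ : σ ≠ 0) (s : ℝ) (u : ℤ → E) (k : ℤ) :
    absDeriv σ u k = (|(k : ℝ)| ^ (σ - s)) • absDeriv s u k := by
  rcases eq_or_ne k 0 with rfl | hk
  · rcases eq_or_ne s 0 with rfl | hs
    · simp [absDeriv, hσ]
    · simp [absDeriv_zero, hσ, hs]
  · rw [absDeriv, absDeriv, smul_smul, ← Real.rpow_add (by positivity), sub_add_cancel]

theorem tsum_enorm_absDeriv_sq {s : ℝ} {u : ℤ → E}
    (hu : Summable fun k : ℤ => |(k : ℝ)| ^ (2 * s) * ‖u k‖ ^ 2) :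
    ∑' k, ‖absDeriv s u k‖ₑ ^ 2 = ENNReal.ofReal (∑' k : ℤ, |(k : ℝ)| ^ (2 * s) * ‖u k‖ ^ 2) := by
  rw [ENNReal.ofReal_tsum_of_nonneg (fun k => by positivity) hu]
  refine tsum_congr fun k => ?_
  rw [← norm_absDeriv_sq, ENNReal.ofReal_pow (norm_nonneg _), ofReal_norm]

theorem tsum_enorm_abs_rpow_sq_ne_top {σ : ℝ} (hσ : σ < -(1 / 2)) :
    ∑' k : ℤ, ‖|(k : ℝ)| ^ σ‖ₑ ^ 2 ≠ ∞ := by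
  have hsum : Summable fun k : ℤ => |(k : ℝ)| ^ (-(-2 * σ)) :=
    Real.summable_abs_int_rpow (by linarith)
  convert hsum.tsum_ofReal_ne_top using 3 with k
  rw [Real.enorm_of_nonneg (by positivity), ← ENNReal.ofReal_pow (by positivity),
    ← Real.rpow_mul_natCast (abs_nonneg _)]
  congr 2
  push_cast
  ring

theorem tsum_enorm_absDeriv_le {σ : ℝ} (hσ : σ ≠ 0) (s : ℝ) (u : ℤ → E) :
    ∑' k, ‖absDeriv σ u k‖ₑ ≤
      ∑' k : ℤ, ‖|(k : ℝ)| ^ (σ - s)‖ₑ ^ 2 + ∑' k, ‖absDeriv s u k‖ₑ ^ 2 := by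
  rw [← ENNReal.tsum_add]
  refine ENNReal.tsum_le_tsum fun k => ?_
  rw [absDeriv_eq_smul hσ s, enorm_smul]
  exact mul_le_sq_add_sq _ _

end AbsDeriv

section Kernel

theorem sqrt_mul_rpow_le {x y z μ : ℝ} (hx : 0 ≤ x) (hz : 0 ≤ z) (hzy : z ≤ y) (hxyz : x ≤ y + z)
    (hμ : 0 ≤ μ) : √(x * y * z) * z ^ μ ≤ √2 * (y * z ^ (μ + 1 / 2)) := by
  have hy : 0 ≤ y := hz.trans hzy
  calc √(x * y * z) * z ^ μ ≤ √(2 * y ^ 2 * z) * z ^ μ := by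
        have hxy : x * y ≤ 2 * y ^ 2 := by nlinarith
        gcongr
    _ = √2 * (y * (z ^ μ * √z)) := by
        rw [Real.sqrt_mul (by positivity), Real.sqrt_mul zero_le_two, Real.sqrt_sq hy]
        ring
    _ = √2 * (y * z ^ (μ + 1 / 2)) := by
        rw [Real.rpow_add_of_nonneg hz hμ (by norm_num), ← Real.sqrt_eq_rpow]

theorem sqrt_mul_min_rpow_le {x y z μ : ℝ} (hx : 0 ≤ x) (hy : 0 ≤ y) (hz : 0 ≤ z)
    (hxyz : x ≤ y + z) (hμ : 0 ≤ μ) :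
    √(x * y * z) * min (x ^ μ) (min (y ^ μ) (z ^ μ)) ≤
      √2 * (y * z ^ (μ + 1 / 2) + z * y ^ (μ + 1 / 2)) := by
  rcases le_total z y with h | h
  · calc √(x * y * z) * min (x ^ μ) (min (y ^ μ) (z ^ μ)) ≤ √(x * y * z) * z ^ μ := by
          gcongr
          exact (min_le_right _ _).trans (min_le_right _ _)
      _ ≤ √2 * (y * z ^ (μ + 1 / 2)) := sqrt_mul_rpow_le hx hz h hxyz hμ
      _ ≤ √2 * (y * z ^ (μ + 1 / 2) + z * y ^ (μ + 1 / 2)) := by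
          gcongr
          exact le_add_of_nonneg_right (by positivity)
  · calc √(x * y * z) * min (x ^ μ) (min (y ^ μ) (z ^ μ)) ≤ √(x * z * y) * y ^ μ := by
          rw [mul_right_comm]
          gcongr
          exact (min_le_right _ _).trans (min_le_left _ _)
      _ ≤ √2 * (z * y ^ (μ + 1 / 2)) := sqrt_mul_rpow_le hx hy h (by linarith) hμ
      _ ≤ √2 * (y * z ^ (μ + 1 / 2) + z * y ^ (μ + 1 / 2)) := by
          gcongr
          exact le_add_of_nonneg_left (by positivity)

end Kernel

section Interaction

variable {T : ℤ → ℤ → ℤ → ℂ} {u : ℤ → ℂ}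

/-- The quadratic nonlinearity `Q(k) = ∑ₙ T(-k, k - n, n) u(k - n) u(n)` of the spectral evolution
equation `∂ₜ u(k) = -i sgn(k) Q(k)`. -/
noncomputable def nonlinearity (T : ℤ → ℤ → ℤ → ℂ) (u : ℤ → ℂ) (k : ℤ) : ℂ :=
  ∑' n : ℤ, T (-k) (k - n) n * u (k - n) * u n

/-- The cubic interaction `T(p, q, r) u(p) u(q) u(r)` over the triad `p + q + r = 0`, encoded by
`x = (p, q)`. -/
def triadInteraction (T : ℤ → ℤ → ℤ → ℂ) (u : ℤ → ℂ) (x : ℤ × ℤ) : ℂ :=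
  T x.1 x.2 (-x.1 - x.2) * (u x.1 * u x.2 * u (-x.1 - x.2))

/-- The rate of change of `|k| |u(k)|²` under the spectral evolution equation. -/
noncomputable def momentumFlux (T : ℤ → ℤ → ℤ → ℂ) (u : ℤ → ℂ) (k : ℤ) : ℝ :=
  2 * k * (conj (u k) * nonlinearity T u k).im

theorem triadInteraction_rotation (hTcyc : ∀ k m n : ℤ, T k m n = T m n k) (x : ℤ × ℤ) :
    triadInteraction T u (triadRotation x) = triadInteraction T u x := by
  have hthd : -(-x.1 - x.2) - x.1 = x.2 := by ring
  simp only [triadInteraction, triadRotation, Equiv.coe_fn_mk, hthd, hTcyc (-x.1 - x.2)]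
  ring

theorem tsum_triadInteraction_fst (p : ℤ) :
    ∑' q, triadInteraction T u (p, q) = u p * nonlinearity T u (-p) := by
  rw [nonlinearity, ← (Equiv.subLeft (-p)).tsum_eq, ← tsum_mul_left]
  refine tsum_congr fun q => ?_
  have hsnd : -p - (-p - q) = q := by ring
  simp only [triadInteraction, Equiv.subLeft_apply, neg_neg, hsnd]
  ring

theorem momentumFlux_neg (hu : ∀ k, u (-k) = conj (u k)) (p : ℤ) :
    momentumFlux T u (-p) = -2 * (∑' q, p • triadInteraction T u (p, q)).im := by
  simp only [zsmul_eq_mul, tsum_mul_left, tsum_triadInteraction_fst, momentumFlux, ← hu, neg_neg]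
  simp only [Int.cast_neg, Complex.mul_im, Complex.intCast_re, Complex.intCast_im, zero_mul,
    add_zero]
  ring

theorem tsum_enorm_momentumFlux_le (hu : ∀ k, u (-k) = conj (u k)) :
    ∑' k, ‖momentumFlux T u k‖ₑ ≤ 2 * ∑' x : ℤ × ℤ, ‖x.1 • triadInteraction T u x‖ₑ := by
  rw [← (Equiv.neg ℤ).tsum_eq, ENNReal.tsum_prod', ← ENNReal.tsum_mul_left]
  refine ENNReal.tsum_le_tsum fun p => ?_
  calc ‖momentumFlux T u (-p)‖ₑ ≤ 2 * ‖∑' q, p • triadInteraction T u (p, q)‖ₑ := by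
        rw [momentumFlux_neg hu, enorm_mul]
        gcongr
        · simp [Real.enorm_eq_ofReal_abs]
        · exact enorm_le_iff_norm_le.2 (Complex.abs_im_le_norm _)
    _ ≤ 2 * ∑' q, ‖p • triadInteraction T u (p, q)‖ₑ := by
        gcongr
        exact enorm_tsum_le_tsum_enorm

theorem tsum_momentumFlux (hTcyc : ∀ k m n : ℤ, T k m n = T m n k)
    (hu : ∀ k, u (-k) = conj (u k))
    (hsum : Summable fun x : ℤ × ℤ => x.1 • triadInteraction T u x) :
    ∑' k, momentumFlux T u k = 0 := by
  have htriads : HasSum (fun x => x.1 • triadInteraction T u x) 0 :=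
    hasSum_fst_zsmul_of_rotation_invariant (triadInteraction_rotation hTcyc) hsum
  have hfibers : HasSum (fun p => ∑' q, p • triadInteraction T u (p, q)) 0 :=
    htriads.prod_fiberwise fun p => (hsum.prod_factor p).hasSum
  have hflux : HasSum (fun p => momentumFlux T u (-p)) 0 := by
    simpa only [momentumFlux_neg hu, Complex.zero_im, mul_zero] using
      (Complex.hasSum_im hfibers).mul_left (-2)
  rw [← (Equiv.neg ℤ).tsum_eq]
  exact hflux.tsum_eq

theorem hasDerivAt_abs_mul_norm_sq {φ : ℝ → ℤ → ℂ} {t : ℝ} {k : ℤ}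
    (hφ : HasDerivAt (fun τ => φ τ k)
      (-(Complex.I * (Int.sign k : ℂ) * nonlinearity T (φ t) k)) t) :
    HasDerivAt (fun τ => |(k : ℝ)| * ‖φ τ k‖ ^ 2) (momentumFlux T (φ t) k) t := by
  refine (hφ.norm_sq.const_mul |(k : ℝ)|).congr_deriv ?_
  have hsign : |(k : ℝ)| * (Int.sign k : ℝ) = k := by
    rw [mul_comm]
    exact_mod_cast Int.sign_mul_abs k
  have hinner : inner ℝ (φ t k) (-(Complex.I * (Int.sign k : ℂ) * nonlinearity T (φ t) k)) =
      Int.sign k * (conj (φ t k) * nonlinearity T (φ t) k).im := by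
    rw [Complex.inner]
    simp only [Complex.mul_re, Complex.mul_im, Complex.neg_re, Complex.neg_im, Complex.conj_re,
      Complex.conj_im, Complex.I_re, Complex.I_im, Complex.intCast_re, Complex.intCast_im]
    ring
  rw [hinner, momentumFlux]
  linear_combination 2 * (conj (φ t k) * nonlinearity T (φ t) k).im * hsign

end Interaction

section InteractionBound

variable {ν C : ℝ} {T : ℤ → ℤ → ℤ → ℂ} (hν : 3 / 2 ≤ ν)
  (hTbound : ∀ k m n : ℤ, ‖T k m n‖ ≤
      C * (|(k : ℝ)| * |(m : ℝ)| * |(n : ℝ)|) ^ ((1 : ℝ) / 2) *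
        min (|(k : ℝ)| ^ (ν - 3 / 2)) (min (|(m : ℝ)| ^ (ν - 3 / 2)) (|(n : ℝ)| ^ (ν - 3 / 2))))

include hTbound in
theorem kernel_const_nonneg : 0 ≤ C := by
  simpa using (norm_nonneg _).trans (hTbound 1 1 1)

include hν hTbound

theorem norm_kernel_le {p q r : ℤ} (h : p + q + r = 0) :
    ‖T p q r‖ ≤ √2 * C *
      (|(q : ℝ)| * |(r : ℝ)| ^ (ν - 1) + |(r : ℝ)| * |(q : ℝ)| ^ (ν - 1)) := by
  have hp : |(p : ℝ)| ≤ |(q : ℝ)| + |(r : ℝ)| := by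
    rw [← abs_neg, show -(p : ℝ) = q + r by linarith [show (p + q + r : ℝ) = 0 from mod_cast h]]
    exact abs_add_le _ _
  have hmin := sqrt_mul_min_rpow_le (abs_nonneg _) (abs_nonneg _) (abs_nonneg _) hp
    (sub_nonneg.2 hν)
  rw [show ν - 3 / 2 + 1 / 2 = ν - 1 by ring, Real.sqrt_eq_rpow] at hmin
  calc ‖T p q r‖ ≤ C * _ := (hTbound p q r).trans_eq (mul_assoc _ _ _)
    _ ≤ C * _ := mul_le_mul_of_nonneg_left hmin (kernel_const_nonneg hTbound)
    _ = _ := by ring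

theorem norm_fst_zsmul_triadInteraction_le (u : ℤ → ℂ) (x : ℤ × ℤ) :
    ‖x.1 • triadInteraction T u x‖ ≤ √2 * C *
      (‖absDeriv 1 u x.1‖ * ‖absDeriv 1 u x.2‖ * ‖absDeriv (ν - 1) u (-x.1 - x.2)‖ +
        ‖absDeriv 1 u x.1‖ * ‖absDeriv 1 u (-x.1 - x.2)‖ * ‖absDeriv (ν - 1) u x.2‖) := by
  obtain ⟨p, q⟩ := x
  have hT := norm_kernel_le hν hTbound (show p + q + (-p - q) = 0 by ring)
  simp only [triadInteraction, norm_absDeriv, Real.rpow_one, zsmul_eq_mul, norm_mul,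
    Complex.norm_intCast]
  generalize -p - q = r at *
  calc |(p : ℝ)| * (‖T p q r‖ * (‖u p‖ * ‖u q‖ * ‖u r‖))
      ≤ |(p : ℝ)| * (√2 * C *
          (|(q : ℝ)| * |(r : ℝ)| ^ (ν - 1) + |(r : ℝ)| * |(q : ℝ)| ^ (ν - 1)) *
            (‖u p‖ * ‖u q‖ * ‖u r‖)) := by gcongr
    _ = _ := by ring

theorem tsum_enorm_fst_zsmul_triadInteraction_le (u : ℤ → ℂ) :
    ∑' x : ℤ × ℤ, ‖x.1 • triadInteraction T u x‖ₑ ≤ ENNReal.ofReal (√2 * C) *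
      (4 * ((∑' k, ‖absDeriv 1 u k‖ₑ ^ 2) * ∑' k, ‖absDeriv (ν - 1) u k‖ₑ)) := by
  have hC := kernel_const_nonneg hTbound
  calc ∑' x : ℤ × ℤ, ‖x.1 • triadInteraction T u x‖ₑ
      ≤ ∑' x : ℤ × ℤ, ENNReal.ofReal (√2 * C) *
          (‖absDeriv 1 u x.1‖ₑ * ‖absDeriv 1 u x.2‖ₑ * ‖absDeriv (ν - 1) u (-x.1 - x.2)‖ₑ +
            ‖absDeriv 1 u x.1‖ₑ * ‖absDeriv 1 u (-x.1 - x.2)‖ₑ * ‖absDeriv (ν - 1) u x.2‖ₑ) := by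
        refine ENNReal.tsum_le_tsum fun x => ?_
        have hx := ENNReal.ofReal_le_ofReal (norm_fst_zsmul_triadInteraction_le hν hTbound u x)
        rw [ENNReal.ofReal_mul (by positivity), ENNReal.ofReal_add (by positivity) (by positivity)]
          at hx
        simpa only [ENNReal.ofReal_mul, norm_nonneg, mul_nonneg, ofReal_norm] using hx
    _ ≤ ENNReal.ofReal (√2 * C) *
          (2 * ((∑' k, ‖absDeriv 1 u k‖ₑ ^ 2) * ∑' k, ‖absDeriv (ν - 1) u k‖ₑ) +
            2 * ((∑' k, ‖absDeriv 1 u k‖ₑ ^ 2) * ∑' k, ‖absDeriv (ν - 1) u k‖ₑ)) := by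
        rw [ENNReal.tsum_mul_left, ENNReal.tsum_add]
        gcongr
        · exact tsum_triad_mul_le (fun k => ‖absDeriv 1 u k‖ₑ) fun k => ‖absDeriv (ν - 1) u k‖ₑ
        · exact tsum_triad_mul_rotate_le (fun k => ‖absDeriv 1 u k‖ₑ)
            fun k => ‖absDeriv (ν - 1) u k‖ₑ
    _ = _ := by ring

theorem exists_tsum_enorm_fst_zsmul_triadInteraction_le {s : ℝ} (hs : ν - 1 / 2 < s) (B : ℝ) :
    ∃ K : ℝ≥0∞, K ≠ ∞ ∧ ∀ u : ℤ → ℂ,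
      (Summable fun k : ℤ => |(k : ℝ)| ^ (2 * s) * ‖u k‖ ^ 2) →
      ∑' k : ℤ, |(k : ℝ)| ^ (2 * s) * ‖u k‖ ^ 2 ≤ B →
      ∑' x : ℤ × ℤ, ‖x.1 • triadInteraction T u x‖ₑ ≤ K := by
  have hZ : ∑' k : ℤ, ‖|(k : ℝ)| ^ (ν - 1 - s)‖ₑ ^ 2 ≠ ∞ :=
    tsum_enorm_abs_rpow_sq_ne_top (by linarith)
  refine ⟨ENNReal.ofReal (√2 * C) * (4 * (ENNReal.ofReal B *
    (∑' k : ℤ, ‖|(k : ℝ)| ^ (ν - 1 - s)‖ₑ ^ 2 + ENNReal.ofReal B))), by finiteness,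
    fun u hu huB => ?_⟩
  have hE : ∑' k, ‖absDeriv s u k‖ₑ ^ 2 ≤ ENNReal.ofReal B := by
    rw [tsum_enorm_absDeriv_sq hu]
    exact ENNReal.ofReal_le_ofReal huB
  refine (tsum_enorm_fst_zsmul_triadInteraction_le hν hTbound u).trans ?_
  gcongr
  · refine le_trans (ENNReal.tsum_le_tsum fun k => ?_) hE
    gcongr
    exact enorm_le_iff_norm_le.2 (norm_absDeriv_mono one_ne_zero (by linarith) u k)
  · exact (tsum_enorm_absDeriv_le (by linarith) s u).trans (by gcongr)

end InteractionBound

theorem summable_abs_mul_norm_sq {E : Type*} [NormedAddCommGroup E] {s : ℝ} (hs : 1 / 2 ≤ s)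
    {u : ℤ → E} (hu : Summable fun k : ℤ => |(k : ℝ)| ^ (2 * s) * ‖u k‖ ^ 2) :
    Summable fun k : ℤ => |(k : ℝ)| * ‖u k‖ ^ 2 := by
  refine .of_nonneg_of_le (fun k => by positivity) (fun k => ?_) hu
  rcases eq_or_ne k 0 with rfl | hk
  · simp only [Int.cast_zero, abs_zero, zero_mul]
    positivity
  · gcongr
    exact Real.self_le_rpow_of_one_le (mod_cast Int.one_le_abs hk) (by linarith)

theorem tsum_nat_mul_norm_sq {u : ℤ → ℂ} (hu : ∀ k, u (-k) = conj (u k))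
    (hsum : Summable fun k : ℤ => |(k : ℝ)| * ‖u k‖ ^ 2) :
    ∑' k : ℕ, (k : ℝ) * ‖u k‖ ^ 2 = (∑' k : ℤ, |(k : ℝ)| * ‖u k‖ ^ 2) / 2 := by
  rw [eq_div_iff two_ne_zero, ← tsum_mul_right]
  have h := hsum.hasSum.nat_add_neg.tsum_eq
  simpa [hu, mul_two] using h

theorem momentum_conserved_general
    (ν : ℝ) (hν : 3 / 2 ≤ ν) (T : ℤ → ℤ → ℤ → ℂ)
    (hTcyc : ∀ k m n : ℤ, T k m n = T m n k)
    (C : ℝ)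
    (hTbound : ∀ k m n : ℤ, ‖T k m n‖ ≤
      C * (|(k : ℝ)| * |(m : ℝ)| * |(n : ℝ)|) ^ ((1 : ℝ) / 2) *
        min (|(k : ℝ)| ^ (ν - 3 / 2)) (min (|(m : ℝ)| ^ (ν - 3 / 2)) (|(n : ℝ)| ^ (ν - 3 / 2))))
    (s : ℝ) (hs : ν - 1 / 2 < s)
    (J : Set ℝ) (hJ : J.OrdConnected) (φ : ℝ → ℤ → ℂ)
    (hconj : ∀ t ∈ J, ∀ k : ℤ, φ t (-k) = starRingEnd ℂ (φ t k))
    (hsummable : ∀ t ∈ J, Summable fun k : ℤ => |(k : ℝ)| ^ (2 * s) * ‖φ t k‖ ^ 2)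
    (hbound : ∃ B : ℝ, ∀ t ∈ J, (∑' k : ℤ, |(k : ℝ)| ^ (2 * s) * ‖φ t k‖ ^ 2) ≤ B)
    (heq : ∀ t ∈ J, ∀ k : ℤ,
      HasDerivAt (fun τ => φ τ k)
        (-(Complex.I * (Int.sign k : ℂ) * nonlinearity T (φ t) k)) t) :
    ∀ t ∈ J, ∀ t' ∈ J,
      ∑' k : ℕ, (k : ℝ) * ‖φ t (k : ℤ)‖ ^ 2 =
        ∑' k : ℕ, (k : ℝ) * ‖φ t' (k : ℤ)‖ ^ 2 := by
  intro t ht t' ht'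
  obtain ⟨B, hB⟩ := hbound
  obtain ⟨K, hK, hinteraction⟩ :=
    exists_tsum_enorm_fst_zsmul_triadInteraction_le hν hTbound hs B
  replace hinteraction (τ) (hτ : τ ∈ J) := hinteraction (φ τ) (hsummable τ hτ) (hB τ hτ)
  have hflux_le (τ) (hτ : τ ∈ J) : ∑' k, ‖momentumFlux T (φ τ) k‖ₑ ≤ 2 * K :=
    (tsum_enorm_momentumFlux_le (hconj τ hτ)).trans (by gcongr; exact hinteraction τ hτ)
  have hflux (τ) (hτ : τ ∈ J) : ∑' k, momentumFlux T (φ τ) k = 0 :=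
    tsum_momentumFlux hTcyc (hconj τ hτ)
      (.of_enorm (ne_top_of_le_ne_top hK (hinteraction τ hτ)))
  have hsum (τ) (hτ : τ ∈ J) : Summable fun k : ℤ => |(k : ℝ)| * ‖φ τ k‖ ^ 2 :=
    summable_abs_mul_norm_sq (by linarith) (hsummable τ hτ)
  have hsub : uIcc t t' ⊆ J := hJ.uIcc_subset ht ht'
  have hchange := tsum_sub_tsum_eq_integral_tsum
    (fun k τ hτ => hasDerivAt_abs_mul_norm_sq (heq τ (hsub hτ) k))
    (ENNReal.mul_ne_top ENNReal.ofNat_ne_top hK) (fun τ hτ => hflux_le τ (hsub hτ))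
    (hsum t ht) (hsum t' ht')
  rw [intervalIntegral.integral_congr fun τ hτ => hflux τ (hsub hτ),
    intervalIntegral.integral_zero, sub_eq_zero] at hchange
  rw [tsum_nat_mul_norm_sq (hconj t ht) (hsum t ht),
    tsum_nat_mul_norm_sq (hconj t' ht') (hsum t' ht'), hchange]

/-- Conservation of the momentum `𝒫 = Σ_{k≥1} k |φ̂(k,t)|²` for solutions of the
spectral evolution equation. -/
theorem momentum_conserved
    (ν : ℝ) (hν : 3 / 2 ≤ ν) (T : ℤ → ℤ → ℤ → ℂ)
    (hTreal : ∀ k m n : ℤ, T k m n = starRingEnd ℂ (T (-k) (-m) (-n)))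
    (hTsym : ∀ k m n : ℤ, T k m n = T k n m)
    (hTcyc : ∀ k m n : ℤ, T k m n = T m n k)
    (hT0 : ∀ k m n : ℤ, k * m * n = 0 → T k m n = 0)
    (C : ℝ) (hC : 0 < C)
    (hTbound : ∀ k m n : ℤ, ‖T k m n‖ ≤
      C * (|(k : ℝ)| * |(m : ℝ)| * |(n : ℝ)|) ^ ((1 : ℝ) / 2) *
        min (|(k : ℝ)| ^ (ν - 3 / 2)) (min (|(m : ℝ)| ^ (ν - 3 / 2)) (|(n : ℝ)| ^ (ν - 3 / 2))))
    (s : ℝ) (hs : ν + 1 / 2 < s)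
    (a b : ℝ) (φ : ℝ → ℤ → ℂ)
    (hzero : ∀ t ∈ Set.Ioo a b, φ t 0 = 0)
    (hconj : ∀ t ∈ Set.Ioo a b, ∀ k : ℤ, φ t (-k) = starRingEnd ℂ (φ t k))
    (hsummable : ∀ t ∈ Set.Ioo a b,
      Summable fun k : ℤ => |(k : ℝ)| ^ (2 * s) * ‖φ t k‖ ^ 2)
    (hbound : ∃ B : ℝ, ∀ t ∈ Set.Ioo a b,
      (∑' k : ℤ, |(k : ℝ)| ^ (2 * s) * ‖φ t k‖ ^ 2) ≤ B)
    (hcont : HsContOn s φ (Set.Ioo a b))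
    (heq : ∀ t ∈ Set.Ioo a b, ∀ k : ℤ,
      HasDerivAt (fun τ => φ τ k)
        (-(Complex.I * (Int.sign k : ℂ) *
          ∑' n : ℤ, T (-k) (k - n) n * φ t (k - n) * φ t n)) t) :
    ∀ t ∈ Set.Ioo a b, ∀ t' ∈ Set.Ioo a b,
      ∑' k : ℕ, (k : ℝ) * ‖φ t (k : ℤ)‖ ^ 2 =
        ∑' k : ℕ, (k : ℝ) * ‖φ t' (k : ℤ)‖ ^ 2 := by
  exact momentum_conserved_general ν hν T hTcyc C hTbound s (by linarith) (Set.Ioo a b)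
    Set.ordConnected_Ioo φ hconj hsummable hbound heq
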